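/- Let Γ be a reduced, non-ascending labeled graph with all labels positive, let e, f be mobile edges of Γ with f ∉ {e, ē}, and let B be an edge path none of whose edges lies in {e, ē, f, f̄}. Suppose that in Γ the edge e can slide over f (a single slide) and that afterwards f can slide over B (every slide valid, every intermediate graph reduced). Then, starting again from Γ, f can slide over B and afterwards e can slide over the concatenated path B·f, and the two composite slide sequences produce the same labeled graph. -/

import Mathlib

/-! Labeled graphs in the sense of generalized Baumslag–Solitar theory. -/

structure LGraph (V E : Type) where
  o : E → V
  bar : E → E
  bar_bar : ∀ e, bar (bar e) = e
  bar_ne : ∀ e, bar e ≠ e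
  lab : E → ℤ

namespace LGraph

variable {V E V' E' : Type}

/-- Terminal vertex of an oriented edge. -/
def t (G : LGraph V E) (e : E) : V := G.o (G.bar e)

/-- All labels are positive. -/
def Positive (G : LGraph V E) : Prop := ∀ e : E, 0 < G.lab e

/-- No collapsible edge: every label-1 edge is a loop. -/
def Reduced (G : LGraph V E) : Prop := ∀ e : E, G.lab e = 1 → G.o e = G.t e

/-- An `n`-rose: one vertex and `n` pairs of oriented edges. -/
def IsRose (G : LGraph V E) (n : ℕ) : Prop :=
  Nat.card V = 1 ∧ Nat.card E = 2 * n

/-- Modulus of a single oriented edge: `λ(ē)/λ(e)`. -/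
def qe (G : LGraph V E) (e : E) : ℚ := (G.lab (G.bar e) : ℚ) / (G.lab e : ℚ)

/-- Modulus of an edge path. -/
def q (G : LGraph V E) (l : List E) : ℚ := (l.map G.qe).prod

/-- Consecutive edges match up. -/
def IsEdgePath (G : LGraph V E) (l : List E) : Prop :=
  List.Chain' (fun a b => G.t a = G.o b) l

/-- An `e`-edge path. -/
def IsEEdgePath (G : LGraph V E) (e : E) (l : List E) : Prop :=
  G.IsEdgePath l ∧
  (∀ a ∈ l, a ≠ e ∧ a ≠ G.bar e) ∧
  (∀ a ∈ l.head?, G.o a = G.o e) ∧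
  ∀ i : Fin l.length, ∃ k : ℤ,
    (G.lab e : ℚ) * G.q (l.take i.1) = (k : ℚ) * (G.lab (l.get i) : ℚ)

/-- A monotone cycle `(e₁,…,eₛ,e)`. -/
def IsMonotoneCycle (G : LGraph V E) (l : List E) (e : E) : Prop :=
  G.IsEEdgePath (G.bar e) l ∧
  G.t (l.getLastD e) = G.o e ∧
  ∃ k : ℤ, G.q (l ++ [e]) = (k : ℚ)

/-- A strict monotone cycle. -/
def IsStrictMonotoneCycle (G : LGraph V E) (l : List E) (e : E) : Prop :=
  G.IsMonotoneCycle l e ∧ G.q (l ++ [e]) ≠ 1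

def HasStrictMonotoneCycle (G : LGraph V E) : Prop :=
  ∃ (l : List E) (e : E), G.IsStrictMonotoneCycle l e

/-- A strict `e`-integer cycle. -/
def IsStrictIntegerCycle (G : LGraph V E) (e : E) (l : List E) : Prop :=
  G.IsEEdgePath e l ∧ l ≠ [] ∧
  G.t (l.getLastD e) = G.o (l.headD e) ∧
  (∃ k : ℤ, G.q l = (k : ℚ)) ∧ G.q l ≠ 1

/-- A mobile edge. -/
def Mobile (G : LGraph V E) (e : E) : Prop :=
  (∃ l, G.IsStrictMonotoneCycle l e ∨ G.IsStrictMonotoneCycle l (G.bar e)) ∨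
  (∃ l, G.IsStrictIntegerCycle e l ∨ G.IsStrictIntegerCycle (G.bar e) l)

/-- The single slide of `e` over `f` is permitted. -/
def CanSlide (G : LGraph V E) (e f : E) : Prop :=
  f ≠ e ∧ f ≠ G.bar e ∧ G.o f = G.o e ∧ G.lab f ∣ G.lab e

open Classical in
/-- The result of the single slide of `e` over `f`. -/
noncomputable def slide (G : LGraph V E) (e f : E) : LGraph V E where
  o := fun x => if x = e then G.t f else G.o x
  bar := G.bar
  bar_bar := G.bar_bar
  bar_ne := G.bar_ne
  lab := fun x => if x = e then G.lab e * G.lab (G.bar f) / G.lab f else G.lab x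

/-- Successively slide `e` over the edges of a path. -/
noncomputable def slidePath : LGraph V E → E → List E → LGraph V E
  | G, _, [] => G
  | G, e, f :: l => slidePath (G.slide e f) e l

/-- Each single slide in the successive slide of `e` over a path is permitted. -/
def CanSlidePath : LGraph V E → E → List E → Prop
  | _, _, [] => True
  | G, e, f :: l => G.CanSlide e f ∧ CanSlidePath (G.slide e f) e l

/-- Each single slide is permitted and each intermediate graph is reduced. -/
def GoodSlidePath : LGraph V E → E → List E → Prop
  | _, _, [] => True
  | G, e, f :: l => G.CanSlide e f ∧ (G.slide e f).Reduced ∧ GoodSlidePath (G.slide e f) e l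

/-- Perform a finite sequence of single slides, given as pairs (slid edge, edge slid over). -/
noncomputable def slideSeq : LGraph V E → List (E × E) → LGraph V E
  | G, [] => G
  | G, p :: rest => slideSeq (G.slide p.1 p.2) rest

/-- A sequence of permitted single slides, each sliding a mobile edge. -/
def MobileSlideSeq : LGraph V E → List (E × E) → Prop
  | _, [] => True
  | G, p :: rest => G.Mobile p.1 ∧ G.CanSlide p.1 p.2 ∧ MobileSlideSeq (G.slide p.1 p.2) rest

/-- Isomorphism of labeled graphs. -/
def Isom (G : LGraph V E) (G' : LGraph V' E') : Prop :=
  ∃ (φ : V → V') (Φ : E → E'),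
    Function.Bijective φ ∧ Function.Bijective Φ ∧
    (∀ x, G'.o (Φ x) = φ (G.o x)) ∧
    (∀ x, G'.bar (Φ x) = Φ (G.bar x)) ∧
    (∀ x, G'.lab (Φ x) = G.lab x)

open Classical in
/-- The result of the induction move at the loop `e` with multiplier `m`. -/
noncomputable def inductionMove (G : LGraph V E) (e : E) (m : ℤ) : LGraph V E where
  o := G.o
  bar := G.bar
  bar_bar := G.bar_bar
  bar_ne := G.bar_ne
  lab := fun x => if x ≠ e ∧ x ≠ G.bar e ∧ G.o x = G.o e then m * G.lab x else G.lab x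

/-- `G'` is obtained from `G` by a single slide move (up to isomorphism). -/
def IsSlideMove (G : LGraph V E) (G' : LGraph V' E') : Prop :=
  ∃ e f, G.CanSlide e f ∧ Isom G' (G.slide e f)

/-- `G'` is obtained from `G` by a (forward) induction move. -/
def IsInductionMove (G : LGraph V E) (G' : LGraph V' E') : Prop :=
  ∃ (e : E) (m : ℤ), G.o e = G.t e ∧ G.lab e = 1 ∧ 1 ≤ m ∧ m ∣ G.lab (G.bar e) ∧
    Isom G' (G.inductionMove e m)

/-- `G'` is obtained from `G` by an A-move. -/
def IsAMove (G : LGraph V E) (G' : LGraph V' E') : Prop :=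
  ∃ (e d : E) (e' : E') (φ : V → V') (Φ : E → E'),
    G.o e = G.t e ∧ G.lab e = 1 ∧ G.lab (G.bar e) ≠ 1 ∧
    G.o d = G.o e ∧ G.t d ≠ G.o e ∧
    G.lab d ≠ 1 ∧ G.lab (G.bar d) ≠ 1 ∧ G.lab d ∣ G.lab (G.bar e) ∧
    (∀ x : E, G.o x = G.o e → x = e ∨ x = G.bar e ∨ x = d) ∧
    G'.o e' = φ (G.t d) ∧ G'.t e' = φ (G.t d) ∧
    G'.lab e' = G.lab (G.bar d) ∧
    G'.lab (G'.bar e') = G.lab (G.bar d) * G.lab (G.bar e) ∧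
    (∀ w₁ w₂ : V, w₁ ≠ G.o e → w₂ ≠ G.o e → φ w₁ = φ w₂ → w₁ = w₂) ∧
    (∀ v' : V', ∃ w : V, w ≠ G.o e ∧ φ w = v') ∧
    (∀ x : E, x ≠ e → x ≠ G.bar e → x ≠ d → x ≠ G.bar d →
      Φ x ≠ e' ∧ Φ x ≠ G'.bar e' ∧
      G'.o (Φ x) = φ (G.o x) ∧ G'.bar (Φ x) = Φ (G.bar x) ∧ G'.lab (Φ x) = G.lab x) ∧
    (∀ x y : E, x ≠ e → x ≠ G.bar e → x ≠ d → x ≠ G.bar d →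
      y ≠ e → y ≠ G.bar e → y ≠ d → y ≠ G.bar d → Φ x = Φ y → x = y) ∧
    (∀ y : E', y ≠ e' → y ≠ G'.bar e' →
      ∃ x : E, x ≠ e ∧ x ≠ G.bar e ∧ x ≠ d ∧ x ≠ G.bar d ∧ Φ x = y)

/-- A strict ascending loop: a loop with `λ(e) = 1 ≠ λ(ē)`. -/
def HasStrictAscendingLoop (G : LGraph V E) : Prop :=
  ∃ e : E, G.o e = G.t e ∧ G.lab e = 1 ∧ G.lab (G.bar e) ≠ 1

end LGraph

/-- A labeled graph with its vertex and edge types bundled. -/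
structure BGraph where
  V : Type
  E : Type
  G : LGraph V E

/-- An elementary deformation move: a slide, an induction move or its inverse,
or an A-move or its inverse. -/
def BGraph.ElemMove (X Y : BGraph) : Prop :=
  LGraph.IsSlideMove X.G Y.G ∨ LGraph.IsInductionMove X.G Y.G ∨
  LGraph.IsInductionMove Y.G X.G ∨ LGraph.IsAMove X.G Y.G ∨ LGraph.IsAMove Y.G X.G

/-- A finite sequence of elementary moves with all intermediate graphs reduced. -/
def BGraph.MoveSeq : BGraph → BGraph → Prop :=
  Relation.ReflTransGen (fun X Y => X.ElemMove Y ∧ Y.G.Reduced)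

/-- A reduced labeled graph is non-ascending if no reduced labeled graph obtained from it
by slide, induction and A-moves (all intermediate graphs reduced) contains a
strict ascending loop. -/
def LGraph.NonAscending {V E : Type} (G : LGraph V E) : Prop :=
  ∀ Y : BGraph, BGraph.MoveSeq ⟨V, E, G⟩ Y → ¬ Y.G.HasStrictAscendingLoop

namespace LGraph

variable {V E : Type}

theorem ext_aux {G H : LGraph V E} (h1 : ∀ x, G.o x = H.o x) (h2 : G.bar = H.bar)
    (h3 : ∀ x, G.lab x = H.lab x) : G = H := by
  cases G; cases H
  obtain rfl := funext h1
  obtain rfl := funext h3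
  cases h2
  rfl

theorem bar_ne_of (G : LGraph V E) {x y : E} (h : x ≠ G.bar y) : G.bar x ≠ y := by
  rintro rfl
  exact h (G.bar_bar x).symm

theorem slide_pos {G : LGraph V E} (hp : G.Positive) {e f : E} (h : G.CanSlide e f) :
    (G.slide e f).Positive := by
  intro x
  by_cases hx : x = e
  · obtain ⟨k, hk⟩ := h.2.2.2
    have hf := hp f
    have he := hp e
    have hb := hp (G.bar f)
    have hk0 : 0 < k := by
      rw [hk] at he
      exact pos_of_mul_pos_right he hf.le
    simp only [slide, hx, if_true]
    rw [hk, mul_assoc, Int.mul_ediv_cancel_left _ hf.ne']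
    positivity
  · simpa [slide, hx] using hp x

/-- Slides of different edges over unrelated edges commute. -/
theorem slide_comm (G : LGraph V E) {e f x y : E} (hef : e ≠ f)
    (hxf : x ≠ f) (hxf' : x ≠ G.bar f) (hye : y ≠ e) (hye' : y ≠ G.bar e) :
    (G.slide f y).slide e x = (G.slide e x).slide f y := by
  have h1 := G.bar_ne_of hxf'
  have h2 := G.bar_ne_of hye'
  refine ext_aux (fun z => ?_) rfl (fun z => ?_)
  · by_cases hz : z = e
    · subst hz; simp [slide, t, h1, hef]
    · by_cases hz' : z = f <;> simp [slide, t, h2, hz, hz', hef, Ne.symm hef]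
  · by_cases hz : z = e
    · subst hz; simp [slide, h1, hef, hxf]
    · by_cases hz' : z = f <;> simp [slide, h2, hz, hz', hef, Ne.symm hef, hye]

theorem canSlide_slide (G : LGraph V E) {e f x y : E} (hef : e ≠ f) (hxf : x ≠ f) :
    (G.slide f y).CanSlide e x ↔ G.CanSlide e x := by
  simp [CanSlide, slide, hef, hxf]

theorem slidePath_comm (l : List E) : ∀ (G : LGraph V E) {e f x : E}, e ≠ f →
    x ≠ f → x ≠ G.bar f → (∀ y ∈ l, y ≠ e ∧ y ≠ G.bar e) →
    (G.slidePath f l).slide e x = (G.slide e x).slidePath f l ∧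
    ((G.slidePath f l).CanSlide e x ↔ G.CanSlide e x) ∧
    ((G.slide e x).CanSlidePath f l ↔ G.CanSlidePath f l) := by
  induction l with
  | nil => intros; simp [slidePath, CanSlidePath]
  | cons y l ih =>
    intro G e f x hef hxf hxf' hl
    obtain ⟨hy, hy'⟩ := hl y (by simp)
    obtain ⟨i1, i2, i3⟩ := ih (G.slide f y) hef hxf hxf'
      (fun z hz => hl z (List.mem_cons_of_mem _ hz))
    have hc := G.slide_comm hef hxf hxf' hy hy'
    refine ⟨?_, ?_, ?_⟩
    · simp only [slidePath]; rw [i1, hc]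
    · simp only [slidePath]; rw [i2, G.canSlide_slide hef hxf]
    · simp only [CanSlidePath]; rw [← hc, i3, G.canSlide_slide hef.symm hy]

theorem slide_swap (G : LGraph V E) (hp : G.Positive) {e f x : E} (hfe : f ≠ e)
    (hfe' : f ≠ G.bar e) (hxe : x ≠ e) (hxe' : x ≠ G.bar e) (hxf : x ≠ f)
    (hxf' : x ≠ G.bar f) (h1 : G.CanSlide e f) (h2 : G.CanSlide f x) :
    G.CanSlide e x ∧ ((G.slide f x).slide e x).CanSlide e f ∧
    (G.slide e f).slide f x = ((G.slide f x).slide e x).slide e f := by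
  obtain ⟨-, -, ho, k, hk⟩ := h1
  obtain ⟨-, -, ho2, m, hm⟩ := h2
  have b1 := G.bar_ne_of hfe'
  have b2 := G.bar_ne_of hxe'
  have b3 := G.bar_ne_of hxf'
  have b4 := G.bar_ne f
  have px := (hp x).ne'
  have pf := (hp f).ne'
  have pb := (hp (G.bar x)).ne'
  have hm0 : m ≠ 0 := by rintro rfl; simp at hm; exact pf hm
  have d1 : G.lab f * G.lab (G.bar x) / G.lab x = m * G.lab (G.bar x) := by
    rw [hm, mul_assoc, Int.mul_ediv_cancel_left _ px]
  have d2 : G.lab e * G.lab (G.bar x) / G.lab x = m * G.lab (G.bar x) * k := by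
    rw [hk, hm, mul_assoc, mul_assoc, Int.mul_ediv_cancel_left _ px]; ring
  have d3 : G.lab e * G.lab (G.bar f) / G.lab f = k * G.lab (G.bar f) := by
    rw [hk, mul_assoc, Int.mul_ediv_cancel_left _ pf]
  have d4 : m * G.lab (G.bar x) * k * G.lab (G.bar f) / (m * G.lab (G.bar x))
      = k * G.lab (G.bar f) := by
    rw [mul_assoc, Int.mul_ediv_cancel_left _ (mul_ne_zero hm0 pb)]
  refine ⟨⟨hxe, hxe', ho2.trans ho, ?_⟩, ⟨hfe, hfe', ?_, ?_⟩, ?_⟩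
  · exact (Dvd.intro m hm.symm).trans (Dvd.intro k hk.symm)
  · simp [slide, t, hfe, b2, b3]
  · simp [slide, hfe, hfe.symm, b3, hxf, d1, d2]
  · refine ext_aux (fun z => ?_) rfl (fun z => ?_)
    · by_cases hz : z = e
      · subst hz; simp [slide, t, b1, b4, hfe.symm]
      · by_cases hz' : z = f <;> simp [slide, t, hz, hz', hfe, b2]
    · by_cases hz : z = e
      · subst hz; simp [slide, b1, b3, b4, hfe, hfe.symm, hxf, d1, d2, d3, d4]
      · by_cases hz' : z = f <;> simp [slide, hz, hz', hfe, b2, hxe]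

theorem main_aux (B : List E) : ∀ (G : LGraph V E) (_ : G.Positive) {e f : E}
    (_ : f ≠ e) (_ : f ≠ G.bar e)
    (_ : ∀ x ∈ B, x ≠ e ∧ x ≠ G.bar e ∧ x ≠ f ∧ x ≠ G.bar f)
    (_ : G.CanSlide e f) (_ : (G.slide e f).CanSlidePath f B),
    G.CanSlidePath f B ∧
      (G.slidePath f B).CanSlidePath e (B ++ [f]) ∧
      (G.slide e f).slidePath f B = (G.slidePath f B).slidePath e (B ++ [f]) := by
  induction B with
  | nil =>
    intro G hp e f _ _ _ h1 _
    simp [CanSlidePath, slidePath, h1]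
  | cons x l ih =>
    intro G hp e f hfe hfe' hB h1 h2
    obtain ⟨hxe, hxe', hxf, hxf'⟩ := hB x (by simp)
    have hl : ∀ x ∈ l, x ≠ e ∧ x ≠ G.bar e ∧ x ≠ f ∧ x ≠ G.bar f :=
      fun z hz => hB z (List.mem_cons_of_mem _ hz)
    obtain ⟨h2a, h2b⟩ := h2
    have hfx : G.CanSlide f x := (G.canSlide_slide hfe hxe).1 h2a
    obtain ⟨s1, s2, s3⟩ := G.slide_swap hp hfe hfe' hxe hxe' hxf hxf' h1 hfx
    have s1' : (G.slide f x).CanSlide e x := (G.canSlide_slide hfe.symm hxf).2 s1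
    rw [s3] at h2b
    obtain ⟨i1, i2, i3⟩ := ih ((G.slide f x).slide e x)
      (slide_pos (slide_pos hp hfx) s1') hfe hfe' hl s2 h2b
    obtain ⟨c1, c2, c3⟩ := slidePath_comm l (G.slide f x) hfe.symm hxf hxf'
      (fun y hy => ⟨(hl y hy).1, (hl y hy).2.1⟩)
    refine ⟨⟨hfx, c3.1 i1⟩, ?_, ?_⟩
    · simp only [slidePath, List.cons_append, CanSlidePath]
      exact ⟨c2.2 s1', by rw [c1]; exact i2⟩
    · simp only [slidePath, List.cons_append]
      rw [c1, s3]; exact i3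

theorem GoodSlidePath.can (B : List E) : ∀ (G : LGraph V E) {f : E},
    G.GoodSlidePath f B → G.CanSlidePath f B := by
  induction B with
  | nil => intros; trivial
  | cons x l ih => exact fun G f h => ⟨h.1, ih _ h.2.2⟩

end LGraph

/-- (Lemma 4.3(b)) In a reduced non-ascending positively-labeled graph,
for mobile edges `e, f` with `f ∉ {e, ē}` and a path `B` avoiding `{e, ē, f, f̄}`:
if `e` can slide over `f` and afterwards `f` over `B` (all slides valid, all intermediate
graphs reduced), then `f` can slide over `B` and afterwards `e` over `B·f`, with the
same resulting labeled graph. -/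
theorem stmt14 {V E : Type} [Finite V] [Finite E] (G : LGraph V E)
    (hpos : G.Positive) (hred : G.Reduced) (hna : G.NonAscending)
    (e f : E) (hme : G.Mobile e) (hmf : G.Mobile f)
    (hfe : f ≠ e) (hfebar : f ≠ G.bar e)
    (B : List E)
    (hB : ∀ x ∈ B, x ≠ e ∧ x ≠ G.bar e ∧ x ≠ f ∧ x ≠ G.bar f)
    (h1 : G.CanSlide e f) (hred1 : (G.slide e f).Reduced)
    (h2 : (G.slide e f).GoodSlidePath f B) :
    G.CanSlidePath f B ∧
      (G.slidePath f B).CanSlidePath e (B ++ [f]) ∧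
      (G.slide e f).slidePath f B = (G.slidePath f B).slidePath e (B ++ [f]) := by
  exact LGraph.main_aux B G hpos hfe hfebar hB h1 (LGraph.GoodSlidePath.can B _ h2)
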